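/- Assume x̄₀ > 0, let T ≥ 0 be such that |φ_t(x₀)₂| < |φ_t(x₀)₁| for all t ≥ T, for z ∈ ℝ² set t_z = inf{t ≥ T : |φ_t(x₀ + z)₁| = |φ_t(x₀ + z)₂|}, and let f(z) = φ_{t_z}(x₀ + z)₁. Then for every C > 0 and ε > 0 there exists ρ > 0 such that for all z with 0 < |z| < ρ, D₀z > 0 and |z| ≤ C (D₀z), one has |(D₀z)^{−μ/(λ+μ)} f(z) − x̄₀^{λ/(λ+μ)}| < ε (intermediate claim in the proof of Theorem 3.5: scaling of the diagonal-crossing point). -/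

import Mathlib

/-!
In the coordinates `u = h(φ_t(x₀ + z))` the flow is linear, `u = (a e^{-μt}, b e^{λt})` with
`(a, b) = h(x₀ + z)`, and the product `u₁^{λ/(λ+μ)} u₂^{μ/(λ+μ)}` is constant in time. The proof
evaluates this invariant at time `0` and at the crossing time `t_z`.

* At time `0`: `h(x₀) = (x̄₀, 0)` (`SaddleFlow.h_stable`) and the second row of `Dh(x₀)` is `D₀`
  (`SaddleFlow.inner_eq_fderiv`), so `a → x̄₀`, and `b / (D₀z) → 1` inside the cone
  `|z| ≤ C D₀z`. The invariant divided by `(D₀z)^{μ/(λ+μ)}` therefore tends to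
  `x̄₀^{λ/(λ+μ)}`.
* At time `t_z`: the crossing exists, and it happens in an arbitrarily small ball around `0` once
  `z` is small (`SaddleFlow.crossing`, which relies on the a priori bound
  `SaddleFlow.norm_phi_lt` and the compactness statement `SaddleFlow.no_crossing`). There `h` is
  close to the identity, so `u₁` and `u₂` are both asymptotic to `f(z)` (`diagonal_close`), and so
  is the invariant, because its exponents add up to `1` (`scaled_eq`).
-/


open Filter Topology Metric Real RealInnerProductSpace

noncomputable section

/-- An element of `ℝ²` (with the Euclidean norm) with given coordinates. -/
def vec2 (a b : ℝ) : EuclideanSpace ℝ (Fin 2) := (WithLp.equiv 2 (Fin 2 → ℝ)).symm ![a, b]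

/-- The setup of Turner, "Convergence of Markov processes near saddle fixed points",
Section 3: a saddle-type vector field `b x = B x + τ x` with `B = diag(-μ, λ)`,
a flow `φ` for `b`, a Hartman linearization `h` on a neighbourhood `U` of `0`,
and a radius `δ` on which `h` is close to the identity. -/
structure SaddleFlow where
  lam : ℝ
  mu : ℝ
  lam_pos : 0 < lam
  mu_pos : 0 < mu
  /-- the nonlinearity τ -/
  tau : EuclideanSpace ℝ (Fin 2) → EuclideanSpace ℝ (Fin 2)
  tau_smooth : ContDiff ℝ 2 tau
  tau_zero : tau 0 = 0
  dtau_zero : fderiv ℝ tau 0 = 0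
  /-- the flow of `b x = B x + τ x` -/
  phi : ℝ → EuclideanSpace ℝ (Fin 2) → EuclideanSpace ℝ (Fin 2)
  phi_zero : ∀ x, phi 0 x = x
  phi_hasDerivAt : ∀ t x, HasDerivAt (fun s => phi s x)
      (vec2 (-mu * (phi t x) 0) (lam * (phi t x) 1) + tau (phi t x)) t
  phi_add : ∀ t s x, phi (t + s) x = phi t (phi s x)
  phi_contDiff : ∀ t, ContDiff ℝ 1 (phi t)
  /-- the domain of the Hartman linearization -/
  U : Set (EuclideanSpace ℝ (Fin 2))
  U_open : IsOpen U
  U_mem : (0 : EuclideanSpace ℝ (Fin 2)) ∈ U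
  /-- the linearizing C¹ diffeomorphism `h : U → V = h '' U` and its inverse -/
  h : EuclideanSpace ℝ (Fin 2) → EuclideanSpace ℝ (Fin 2)
  hinv : EuclideanSpace ℝ (Fin 2) → EuclideanSpace ℝ (Fin 2)
  h_smooth : ∀ x ∈ U, ContDiffAt ℝ 1 h x
  hinv_smooth : ∀ y ∈ h '' U, ContDiffAt ℝ 1 hinv y
  V_open : IsOpen (h '' U)
  left_inv : ∀ x ∈ U, hinv (h x) = x
  right_inv : ∀ y ∈ h '' U, h (hinv y) = y
  /-- the Hölder exponent of the partial derivatives of `h`, `h⁻¹` -/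
  alpha0 : ℝ
  alpha0_mem : alpha0 ∈ Set.Ioc (0 : ℝ) 1
  holder : ∃ C : ℝ,
      (∀ x ∈ U, ∀ y ∈ U, ‖fderiv ℝ h x - fderiv ℝ h y‖ ≤ C * ‖x - y‖ ^ alpha0) ∧
      (∀ x ∈ h '' U, ∀ y ∈ h '' U,
        ‖fderiv ℝ hinv x - fderiv ℝ hinv y‖ ≤ C * ‖x - y‖ ^ alpha0)
  /-- `h x = x + o(|x|)` as `x → 0` -/
  h_littleO : (fun x => h x - x) =o[𝓝 (0 : EuclideanSpace ℝ (Fin 2))] (fun x => x)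
  /-- the conjugation `h (φ_t x) = e^{Bt} (h x)` -/
  h_conj : ∀ t x, x ∈ U → phi t x ∈ U →
      h (phi t x) = vec2 (Real.exp (-mu * t) * (h x) 0) (Real.exp (lam * t) * (h x) 1)
  /-- the radius δ -/
  delta : ℝ
  delta_pos : 0 < delta
  delta_lt_one : delta < 1
  ball_sub : closedBall (0 : EuclideanSpace ℝ (Fin 2)) delta ⊆ U ∩ h '' U
  /-- `sup_{0<|x|<δ} max(|h x|/|x|, |h⁻¹ x|/|x|) < 2` -/
  h_ratio : ∃ c : ℝ, c < 2 ∧ ∀ x : EuclideanSpace ℝ (Fin 2), ‖x‖ < delta →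
      ‖h x‖ ≤ c * ‖x‖ ∧ ‖hinv x‖ ≤ c * ‖x‖
  /-- `sup_{|x|<δ} max(‖Dh(x) − I‖, ‖Dh⁻¹(x) − I‖) < 1/2` -/
  deriv_close : ∃ c : ℝ, c < 1/2 ∧ ∀ x : EuclideanSpace ℝ (Fin 2), ‖x‖ < delta →
      ‖fderiv ℝ h x - ContinuousLinearMap.id ℝ (EuclideanSpace ℝ (Fin 2))‖ ≤ c ∧
      ‖fderiv ℝ hinv x - ContinuousLinearMap.id ℝ (EuclideanSpace ℝ (Fin 2))‖ ≤ c

/-! ### Coordinates on the plane -/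

/-- The plane `ℝ²` with its Euclidean norm. -/
abbrev Plane := EuclideanSpace ℝ (Fin 2)

@[simp] lemma vec2_zero (a b : ℝ) : vec2 a b 0 = a := rfl

@[simp] lemma vec2_one (a b : ℝ) : vec2 a b 1 = b := rfl

lemma abs_apply_le_norm (x : Plane) (i : Fin 2) : |x i| ≤ ‖x‖ := by
  have := PiLp.norm_apply_le x i
  rwa [Real.norm_eq_abs] at this

lemma norm_le_abs_add (x : Plane) : ‖x‖ ≤ |x 0| + |x 1| := by
  rw [EuclideanSpace.norm_eq, Fin.sum_univ_two, Real.norm_eq_abs, Real.norm_eq_abs]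
  refine Real.sqrt_le_iff.2 ⟨by positivity, ?_⟩
  nlinarith [mul_nonneg (abs_nonneg (x 0)) (abs_nonneg (x 1))]

lemma continuous_vec2 : Continuous (fun p : ℝ × ℝ => vec2 p.1 p.2) := by
  unfold vec2
  refine (PiLp.continuous_toLp 2 (fun _ : Fin 2 => ℝ)).comp (continuous_pi fun i => ?_)
  fin_cases i
  · exact continuous_fst
  · exact continuous_snd

lemma continuous_coord (i : Fin 2) : Continuous (fun x : Plane => x i) := by fun_prop

lemma tendsto_coord {α : Type*} {l : Filter α} {g : α → Plane} {y : Plane}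
    (hg : Tendsto g l (𝓝 y)) (i : Fin 2) : Tendsto (fun a => g a i) l (𝓝 (y i)) :=
  ((continuous_coord i).tendsto y).comp hg

lemma tendsto_clm_apply {α : Type*} {l : Filter α} {A : α → Plane →L[ℝ] Plane}
    {A₀ : Plane →L[ℝ] Plane} {g : α → Plane} {y : Plane} (hA : Tendsto A l (𝓝 A₀)) (hg : Tendsto g l (𝓝 y)) :
    Tendsto (fun a => A a (g a)) l (𝓝 (A₀ y)) :=
  ((isBoundedBilinearMap_apply (𝕜 := ℝ) (E := Plane) (F := Plane)).continuous.tendsto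
    (A₀, y)).comp (hA.prodMk_nhds hg)

/-! ### The linear flow and trajectories inside the linearized ball -/

namespace SaddleFlow

variable (S : SaddleFlow)

/-- The linear saddle flow `e^{Bt} y`. -/
def lin (t : ℝ) (y : Plane) : Plane :=
  vec2 (Real.exp (-S.mu * t) * y 0) (Real.exp (S.lam * t) * y 1)

lemma continuous_lin : Continuous (fun p : Plane × ℝ => S.lin p.2 p.1) := by
  have h0 := (continuous_coord 0).comp (continuous_fst : Continuous (Prod.fst : Plane × ℝ → Plane))
  have h1 := (continuous_coord 1).comp (continuous_fst : Continuous (Prod.fst : Plane × ℝ → Plane))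
  have e0 : Continuous (fun p : Plane × ℝ => Real.exp (-S.mu * p.2)) := by fun_prop
  have e1 : Continuous (fun p : Plane × ℝ => Real.exp (S.lam * p.2)) := by fun_prop
  exact continuous_vec2.comp ((e0.mul h0).prodMk (e1.mul h1))

lemma norm_lin_le (t : ℝ) (y : Plane) :
    ‖S.lin t y‖ ≤ Real.exp (-S.mu * t) * |y 0| + Real.exp (S.lam * t) * |y 1| := by
  refine (norm_le_abs_add _).trans (le_of_eq ?_)
  simp [lin, abs_mul]

lemma mem_U {x : Plane} (hx : ‖x‖ ≤ S.delta) : x ∈ S.U :=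
  (S.ball_sub (by simpa using hx)).1

lemma mem_V {x : Plane} (hx : ‖x‖ ≤ S.delta) : x ∈ S.h '' S.U :=
  (S.ball_sub (by simpa using hx)).2

lemma continuous_phi (x : Plane) : Continuous (fun t => S.phi t x) :=
  continuous_iff_continuousAt.2 fun t => (S.phi_hasDerivAt t x).continuousAt

/-- As long as the linear trajectory stays in the ball of radius `δ/2`, the nonlinear one cannot
leave the ball of radius `δ`: inside that ball it is `h⁻¹` of the linear trajectory, hence of norm
at most `c δ/2` with `c < 2`, and by the intermediate value theorem it cannot jump the gap. -/
lemma norm_phi_lt {x : Plane} (hx : ‖x‖ < S.delta) {t₁ : ℝ}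
    (hlin : ∀ t ∈ Set.Icc 0 t₁, ‖S.lin t (S.h x)‖ ≤ S.delta / 2) :
    ∀ t ∈ Set.Icc 0 t₁, ‖S.phi t x‖ < S.delta := by
  obtain ⟨c, hc2, hc⟩ := S.h_ratio
  have hδ := S.delta_pos
  intro t ht
  by_contra! hcon
  obtain ⟨M, hM1, hM2⟩ : ∃ M, max (max c 0 * (S.delta / 2)) ‖x‖ < M ∧ M < S.delta := by
    refine exists_between (max_lt ?_ hx)
    have : max c 0 < 2 := max_lt hc2 (by norm_num)
    nlinarith
  have hcont : ContinuousOn (fun s => ‖S.phi s x‖) (Set.Icc 0 t) :=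
    (S.continuous_phi x).norm.continuousOn
  have hmem : M ∈ Set.Icc ‖S.phi 0 x‖ ‖S.phi t x‖ := by
    rw [S.phi_zero]
    exact ⟨((le_max_right _ _).trans_lt hM1).le, hM2.le.trans hcon⟩
  obtain ⟨s, hs, hsM⟩ := intermediate_value_Icc ht.1 hcont hmem
  have hsM' : ‖S.phi s x‖ = M := hsM
  have hsU : S.phi s x ∈ S.U := S.mem_U (by rw [hsM']; exact hM2.le)
  have hconj : S.h (S.phi s x) = S.lin s (S.h x) := S.h_conj s x (S.mem_U hx.le) hsU
  have hl := hlin s ⟨hs.1, hs.2.trans ht.2⟩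
  have h1 := (hc (S.lin s (S.h x)) (by linarith)).2
  rw [← hconj, S.left_inv _ hsU, hsM', hconj] at h1
  have h2 : c * ‖S.lin s (S.h x)‖ ≤ max c 0 * (S.delta / 2) :=
    mul_le_mul (le_max_left _ _) hl (norm_nonneg _) (le_max_right _ _)
  exact absurd ((le_max_left _ _).trans_lt hM1) (not_lt.2 (h1.trans h2))

lemma phi_eq {x : Plane} (hx : ‖x‖ < S.delta) {t : ℝ} (ht : ‖S.phi t x‖ < S.delta) :
    S.h (S.phi t x) = S.lin t (S.h x) ∧ S.phi t x = S.hinv (S.lin t (S.h x)) := by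
  have h1 : S.h (S.phi t x) = S.lin t (S.h x) := S.h_conj t x (S.mem_U hx.le) (S.mem_U ht.le)
  exact ⟨h1, by rw [← h1, S.left_inv _ (S.mem_U ht.le)]⟩

lemma norm_hinv_le {y : Plane} (hy : ‖y‖ < S.delta) : ‖S.hinv y‖ ≤ 2 * ‖y‖ := by
  obtain ⟨c, hc2, hc⟩ := S.h_ratio
  exact (hc y hy).2.trans (mul_le_mul_of_nonneg_right hc2.le (norm_nonneg _))

lemma h_zero : S.h 0 = 0 := by
  obtain ⟨c, -, hc⟩ := S.h_ratio
  have := (hc 0 (by simpa using S.delta_pos)).1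
  simpa using this

/-! ### The linearization at `x₀` -/

lemma tendsto_exp_neg {k : ℝ} (hk : 0 < k) :
    Tendsto (fun t : ℝ => Real.exp (-k * t)) atTop (𝓝 0) := by
  refine Real.tendsto_exp_atBot.comp ?_
  exact tendsto_id.const_mul_atTop_of_neg (by linarith)

/-- The linearization maps `x₀` to `(x̄₀, 0)`: compare `e^{μt} φ_t(x₀)` with
`e^{μt} h(φ_t(x₀)) = (h(x₀)₁, e^{(λ+μ)t} h(x₀)₂)`. -/
lemma h_stable {x₀ : Plane} (hx₀ : ‖x₀‖ < S.delta)
    (hst : Tendsto (fun t => S.phi t x₀) atTop (𝓝 (0 : Plane))) {xb : ℝ}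
    (hxb : Tendsto (fun t => Real.exp (S.mu * t) • S.phi t x₀) atTop (𝓝 (vec2 xb 0))) :
    S.h x₀ = vec2 xb 0 := by
  have hsmall : ∀ᶠ t in atTop, ‖S.phi t x₀‖ < S.delta := by
    have := hst.norm
    rw [norm_zero] at this
    exact this.eventually (gt_mem_nhds S.delta_pos)
  have ho : (fun t => Real.exp (S.mu * t) • (S.h (S.phi t x₀) - S.phi t x₀)) =o[atTop]
      (fun t => Real.exp (S.mu * t) • S.phi t x₀) :=
    (Asymptotics.isBigO_refl _ _).smul_isLittleO (S.h_littleO.comp_tendsto hst)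
  have hO : (fun t => Real.exp (S.mu * t) • S.phi t x₀) =O[atTop] (fun _ => (1 : ℝ)) :=
    hxb.isBigO_one ℝ
  have hz := (Asymptotics.isLittleO_one_iff ℝ).1 (ho.trans_isBigO hO)
  have hlim : Tendsto (fun t => Real.exp (S.mu * t) • S.lin t (S.h x₀)) atTop
      (𝓝 (vec2 xb 0)) := by
    have := hz.add hxb
    rw [zero_add] at this
    refine this.congr' ?_
    filter_upwards [hsmall] with t ht
    rw [← smul_add, sub_add_cancel, (S.phi_eq hx₀ ht).1]
  have h0 := tendsto_coord hlim 0
  have h1 := tendsto_coord hlim 1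
  have e0 : S.h x₀ 0 = xb := by
    refine tendsto_nhds_unique (tendsto_const_nhds (f := atTop (α := ℝ))) (h0.congr fun t => ?_)
    simp only [lin, PiLp.smul_apply, vec2_zero, smul_eq_mul]
    rw [← mul_assoc, ← Real.exp_add]
    simp
  have e1 : S.h x₀ 1 = 0 := by
    have hE := tendsto_exp_neg (add_pos S.lam_pos S.mu_pos)
    have hprod := hE.mul h1
    rw [zero_mul] at hprod
    refine tendsto_nhds_unique (tendsto_const_nhds (f := atTop (α := ℝ))) (hprod.congr fun t => ?_)
    simp only [lin, PiLp.smul_apply, vec2_one, smul_eq_mul]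
    rw [← mul_assoc, ← mul_assoc, ← Real.exp_add, ← Real.exp_add]
    have : -(S.lam + S.mu) * t + S.mu * t + S.lam * t = 0 := by ring
    rw [this, Real.exp_zero, one_mul]
  ext i
  fin_cases i
  · exact e0
  · exact e1

lemma h_differentiableAt {x : Plane} (hx : x ∈ S.U) : DifferentiableAt ℝ S.h x :=
  (S.h_smooth x hx).differentiableAt one_ne_zero

lemma fderiv_h_zero : fderiv ℝ S.h 0 = ContinuousLinearMap.id ℝ Plane := by
  have : HasFDerivAt S.h (ContinuousLinearMap.id ℝ Plane) 0 := by
    rw [hasFDerivAt_iff_isLittleO]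
    simpa [S.h_zero] using S.h_littleO
  exact this.fderiv

lemma lin_apply_one (t : ℝ) (y : Plane) : S.lin t y 1 = Real.exp (S.lam * t) * y 1 := rfl

lemma lin_apply_zero (t : ℝ) (y : Plane) : S.lin t y 0 = Real.exp (-S.mu * t) * y 0 := rfl

/-- The row `D₀` is the second row of `Dh(x₀)`: differentiate `h ∘ φ_t = e^{Bt} h` at `x₀`, and
use that `Dh(φ_t(x₀)) → Dh(0) = I`. -/
lemma inner_eq_fderiv {x₀ : Plane} (hx₀ : ‖x₀‖ < S.delta)
    (hst : Tendsto (fun t => S.phi t x₀) atTop (𝓝 (0 : Plane))) {D₀ : Plane}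
    (hD₀ : Tendsto (fun t => Real.exp (-S.lam * t) • fderiv ℝ (S.phi t) x₀) atTop
      (𝓝 ((innerSL ℝ D₀).smulRight (EuclideanSpace.single 1 (1 : ℝ))))) (z : Plane) :
    (fderiv ℝ S.h x₀ z) 1 = ⟪D₀, z⟫ := by
  have hsmall : ∀ᶠ t in atTop, ‖S.phi t x₀‖ < S.delta := by
    have := hst.norm
    rw [norm_zero] at this
    exact this.eventually (gt_mem_nhds S.delta_pos)
  have hDh : Tendsto (fun t => fderiv ℝ S.h (S.phi t x₀)) atTop
      (𝓝 (ContinuousLinearMap.id ℝ Plane)) := by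
    have hc : ContinuousAt (fderiv ℝ S.h) 0 :=
      (S.h_smooth 0 S.U_mem).continuousAt_fderiv one_ne_zero
    have := hc.tendsto.comp hst
    rwa [fderiv_h_zero] at this
  have hlim := tendsto_coord ((tendsto_clm_apply hDh (tendsto_clm_apply hD₀ (tendsto_const_nhds (x := z))))) 1
  have hval : (ContinuousLinearMap.id ℝ Plane)
      (((innerSL ℝ D₀).smulRight (EuclideanSpace.single 1 (1 : ℝ))) z) 1 = ⟪D₀, z⟫ := by
    simp
  rw [hval] at hlim
  refine tendsto_nhds_unique (tendsto_const_nhds (f := atTop (α := ℝ))) (hlim.congr' ?_)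
  filter_upwards [hsmall] with t ht
  have hU₀ := S.mem_U hx₀.le
  have hphi : DifferentiableAt ℝ (S.phi t) x₀ :=
    (S.phi_contDiff t).differentiable one_ne_zero x₀
  have hA : HasFDerivAt (fun x => S.h (S.phi t x))
      ((fderiv ℝ S.h (S.phi t x₀)).comp (fderiv ℝ (S.phi t) x₀)) x₀ :=
    (S.h_differentiableAt (S.mem_U ht.le)).hasFDerivAt.comp x₀ hphi.hasFDerivAt
  have hA1 := ((EuclideanSpace.proj (1 : Fin 2) :
    Plane →L[ℝ] ℝ).hasFDerivAt.comp x₀ hA)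
  have hB1 := ((EuclideanSpace.proj (1 : Fin 2) :
    Plane →L[ℝ] ℝ).hasFDerivAt.comp x₀
      (S.h_differentiableAt hU₀).hasFDerivAt).const_mul (Real.exp (S.lam * t))
  have hev : (fun x => (EuclideanSpace.proj (1 : Fin 2) : Plane →L[ℝ] ℝ) (S.h (S.phi t x)))
      =ᶠ[𝓝 x₀] fun x => Real.exp (S.lam * t) *
        (EuclideanSpace.proj (1 : Fin 2) : Plane →L[ℝ] ℝ) (S.h x) := by
    have h1 : ∀ᶠ x in 𝓝 x₀, x ∈ S.U := S.U_open.mem_nhds hU₀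
    have h2 : ∀ᶠ x in 𝓝 x₀, S.phi t x ∈ S.U :=
      hphi.continuousAt.eventually (S.U_open.mem_nhds (S.mem_U ht.le))
    filter_upwards [h1, h2] with x hx1 hx2
    rw [S.h_conj t x hx1 hx2]
    simp
  have heq := DFunLike.congr_fun (hA1.unique (hB1.congr_of_eventuallyEq hev)) z
  change (fderiv ℝ S.h (S.phi t x₀) (fderiv ℝ (S.phi t) x₀ z)) 1 =
    Real.exp (S.lam * t) * (fderiv ℝ S.h x₀ z) 1 at heq
  simp only [_root_.smul_apply, map_smul, PiLp.smul_apply, smul_eq_mul]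
  rw [heq, ← mul_assoc, ← Real.exp_add]
  simp

/-! ### Existence and location of the diagonal crossing -/

/-- On a fixed time interval `[T, s]` with `T ≥ 0` the stable trajectory keeps `|φ₁| > |φ₂|`, and
by compactness so do the linearized trajectories starting near `(x̄₀, 0)`. -/
lemma no_crossing {x₀ : Plane} (hx₀ : ‖x₀‖ < S.delta) {xb : ℝ}
    (hh : S.h x₀ = vec2 xb 0) (hxb : |xb| < S.delta / 4) {T : ℝ} (hT : 0 ≤ T)
    (hdiag : ∀ t : ℝ, T ≤ t → |S.phi t x₀ 1| < |S.phi t x₀ 0|) (s : ℝ) :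
    ∀ᶠ y in 𝓝 (S.h x₀), ∀ t ∈ Set.Icc T s,
      |S.hinv (S.lin t y) 1| < |S.hinv (S.lin t y) 0| := by
  refine isCompact_Icc.eventually_forall_of_forall_eventually fun t ht => ?_
  have hlin : ∀ t, 0 ≤ t → ‖S.lin t (S.h x₀)‖ ≤ S.delta / 2 := by
    intro t ht
    refine (S.norm_lin_le t _).trans ?_
    rw [hh, vec2_zero, vec2_one, abs_zero, mul_zero, add_zero]
    have : Real.exp (-S.mu * t) ≤ 1 := Real.exp_le_one_iff.2 (by nlinarith [S.mu_pos])
    nlinarith [abs_nonneg xb]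
  have ht0 : 0 ≤ t := hT.trans ht.1
  have hlt := S.norm_phi_lt hx₀ (fun u (hu : u ∈ Set.Icc 0 t) => hlin u hu.1) t ⟨ht0, le_rfl⟩
  have heq := (S.phi_eq hx₀ hlt).2
  have hV : S.lin t (S.h x₀) ∈ S.h '' S.U :=
    S.mem_V ((hlin t ht0).trans (by linarith [S.delta_pos]))
  have hc : Tendsto (fun p : Plane × ℝ => S.hinv (S.lin p.2 p.1)) (𝓝 (S.h x₀, t))
      (𝓝 (S.hinv (S.lin t (S.h x₀)))) :=
    ((S.hinv_smooth _ hV).continuousAt.tendsto).comp (S.continuous_lin.tendsto (S.h x₀, t))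
  refine (tendsto_coord hc 1).abs.eventually_lt (tendsto_coord hc 0).abs ?_
  rw [← heq]
  exact hdiag t ht.1

/-- At the crossing time the nonlinear point `w = φ_t(x)` lies in the small ball where `h` is
`η`-close to the identity.  Let `t₂` be the time at which the unstable linear coordinate reaches
`r`.  On `[0, t₂]` the trajectory is linearizable, on `[T, s]` there is no crossing, and on
`[s, t₂]` both linear coordinates are at most `r`; at `t₂` the unstable one dominates, so a
crossing occurs in `[s, t₂]`. -/
lemma crossing {x : Plane} (hx : ‖x‖ < S.delta) {T s r κ η : ℝ} (hT : 0 ≤ T) (hTs : T ≤ s)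
    (hr : 0 < r) (hrδ : r ≤ S.delta / 8) (hrκ : 4 * r ≤ κ) (hη : η ≤ 1 / 20)
    (hκ : ∀ w : Plane, ‖w‖ < κ → ‖S.h w - w‖ ≤ η * ‖w‖)
    (ha : 0 < S.h x 0) (haδ : S.h x 0 ≤ S.delta / 4)
    (has : Real.exp (-S.mu * s) * S.h x 0 ≤ r / 4)
    (hb : 0 < S.h x 1) (hbs : Real.exp (S.lam * s) * S.h x 1 ≤ r)
    (hno : ∀ t ∈ Set.Icc T s,
      |S.hinv (S.lin t (S.h x)) 1| < |S.hinv (S.lin t (S.h x)) 0|) :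
    let t := sInf {t : ℝ | T ≤ t ∧ |S.phi t x 0| = |S.phi t x 1|}
    |S.phi t x 0| = |S.phi t x 1| ∧ S.h (S.phi t x) = S.lin t (S.h x) ∧
      ‖S.h (S.phi t x) - S.phi t x‖ ≤ η * ‖S.phi t x‖ := by
  intro t
  have hδ := S.delta_pos
  have hlam := S.lam_pos
  have hmu := S.mu_pos
  set t₂ := Real.log (r / S.h x 1) / S.lam with ht₂
  have hlt₂ : Real.exp (S.lam * t₂) * S.h x 1 = r := by
    rw [ht₂, mul_div_cancel₀ _ hlam.ne', Real.exp_log (by positivity), div_mul_cancel₀ _ hb.ne']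
  have hst₂ : s ≤ t₂ := by
    rw [ht₂, le_div_iff₀ hlam, Real.le_log_iff_exp_le (by positivity), le_div_iff₀ hb, mul_comm s]
    exact hbs
  have hb_le : ∀ u, u ≤ t₂ → Real.exp (S.lam * u) * S.h x 1 ≤ r := by
    intro u hu
    rw [← hlt₂]
    gcongr
  have ha_le : ∀ u, s ≤ u → Real.exp (-S.mu * u) * S.h x 0 ≤ r / 4 := by
    intro u hu
    refine le_trans ?_ has
    refine mul_le_mul_of_nonneg_right (Real.exp_le_exp.2 ?_) ha.le
    nlinarith
  have hlin : ∀ u ∈ Set.Icc 0 t₂, ‖S.lin u (S.h x)‖ ≤ S.delta / 2 := by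
    intro u hu
    refine (S.norm_lin_le u _).trans ?_
    rw [abs_of_pos ha, abs_of_pos hb]
    have h1 : Real.exp (-S.mu * u) ≤ 1 := Real.exp_le_one_iff.2 (by nlinarith [hu.1])
    have h2 := hb_le u hu.2
    nlinarith
  have hphi : ∀ u ∈ Set.Icc 0 t₂, S.h (S.phi u x) = S.lin u (S.h x) ∧
      S.phi u x = S.hinv (S.lin u (S.h x)) := fun u hu =>
    S.phi_eq hx (S.norm_phi_lt hx hlin u hu)
  -- On `[s, t₂]` the trajectory is in the ball of radius `5r/2 < κ`.
  have hclose : ∀ u ∈ Set.Icc s t₂, ‖S.phi u x‖ ≤ 5 / 2 * r ∧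
      ‖S.h (S.phi u x) - S.phi u x‖ ≤ η * ‖S.phi u x‖ := by
    intro u hu
    have hu' : u ∈ Set.Icc 0 t₂ := ⟨(hT.trans hTs).trans hu.1, hu.2⟩
    have h1 : ‖S.lin u (S.h x)‖ ≤ 5 / 4 * r := by
      refine (S.norm_lin_le u _).trans ?_
      rw [abs_of_pos ha, abs_of_pos hb]
      linarith [hb_le u hu.2, ha_le u hu.1]
    have h2 : ‖S.phi u x‖ ≤ 5 / 2 * r := by
      rw [(hphi u hu').2]
      refine (S.norm_hinv_le ((hlin u hu').trans_lt (by linarith))).trans ?_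
      linarith
    exact ⟨h2, hκ _ (by linarith)⟩
  have hs0 : |S.phi s x 1| < |S.phi s x 0| := by
    rw [(hphi s ⟨hT.trans hTs, hst₂⟩).2]
    exact hno s ⟨hTs, le_rfl⟩
  have h20 : |S.phi t₂ x 0| < |S.phi t₂ x 1| := by
    obtain ⟨h1, h2⟩ := hclose t₂ ⟨hst₂, le_rfl⟩
    have h3 : ‖S.h (S.phi t₂ x) - S.phi t₂ x‖ ≤ r / 8 := by
      refine h2.trans ?_
      nlinarith [norm_nonneg (S.phi t₂ x)]
    have hc0 := (abs_apply_le_norm _ 0).trans h3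
    have hc1 := (abs_apply_le_norm _ 1).trans h3
    rw [PiLp.sub_apply, (hphi t₂ ⟨(hT.trans hTs).trans hst₂, le_rfl⟩).1] at hc0 hc1
    rw [lin_apply_zero] at hc0
    rw [lin_apply_one, hlt₂] at hc1
    have hp : 0 < Real.exp (-S.mu * t₂) * S.h x 0 := by positivity
    have hq := ha_le t₂ hst₂
    rw [abs_le] at hc0 hc1
    have : |S.phi t₂ x 0| ≤ 3 * r / 8 := abs_le.2 ⟨by linarith, by linarith⟩
    have := le_abs_self (S.phi t₂ x 1)
    linarith
  set Z := {t : ℝ | T ≤ t ∧ |S.phi t x 0| = |S.phi t x 1|} with hZ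
  have hcont : ∀ i, Continuous (fun u => |S.phi u x i|) := fun i =>
    ((continuous_coord i).comp (S.continuous_phi x)).abs
  obtain ⟨v, hv, hv0⟩ : ∃ v ∈ Set.Icc s t₂, |S.phi v x 0| - |S.phi v x 1| = 0 :=
    intermediate_value_Icc' hst₂ ((hcont 0).sub (hcont 1)).continuousOn
      ⟨(sub_neg.2 h20).le, (sub_pos.2 hs0).le⟩
  have hvZ : v ∈ Z := ⟨hTs.trans hv.1, by linarith⟩
  have hbdd : BddBelow Z := ⟨T, fun u hu => hu.1⟩
  have hclosed : IsClosed Z := isClosed_Ici.inter (isClosed_eq (hcont 0) (hcont 1))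
  have htZ : t ∈ Z := hclosed.csInf_mem ⟨v, hvZ⟩ hbdd
  have htv : t ≤ v := csInf_le hbdd hvZ
  have hst : s ≤ t := by
    by_contra! hlt
    have h1 := hno t ⟨htZ.1, hlt.le⟩
    rw [← (hphi t ⟨hT.trans htZ.1, htv.trans hv.2⟩).2] at h1
    exact h1.ne' htZ.2
  exact ⟨htZ.2, (hphi t ⟨hT.trans htZ.1, htv.trans hv.2⟩).1, (hclose t ⟨hst, htv.trans hv.2⟩).2⟩

end SaddleFlow

/-! ### The linear invariant at the crossing -/

/-- A point `w` on the diagonals whose image under an `η`-perturbation of the identity lies in the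
open first quadrant lies in that quadrant too, and is comparable with its image. -/
lemma diagonal_close {w u : Plane} {η : ℝ} (hη : η ≤ 1 / 20)
    (hw : |w 0| = |w 1|) (hc : ‖u - w‖ ≤ η * ‖w‖) (h0 : 0 < u 0) (h1 : 0 < u 1) (hη0 : 0 ≤ η) :
    0 < w 0 ∧ |u 0 / w 0 - 1| ≤ 2 * η ∧ |u 1 / w 0 - 1| ≤ 2 * η := by
  have hn : ‖w‖ ≤ 2 * |w 0| := by
    have := norm_le_abs_add w
    rw [← hw] at this
    linarith
  have hc' : ‖u - w‖ ≤ 2 * η * |w 0| := hc.trans (by nlinarith)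
  have c0 := (abs_apply_le_norm _ 0).trans hc'
  have c1 := (abs_apply_le_norm _ 1).trans hc'
  rw [PiLp.sub_apply] at c0 c1
  have hsmall : 2 * η * |w 0| ≤ |w 0| / 10 := by nlinarith [abs_nonneg (w 0)]
  have pos : ∀ {a b c : ℝ}, 0 < b → |b - a| ≤ c → c ≤ |a| / 10 → 0 < a := by
    intro a b c hb h h'
    by_contra! ha
    rw [abs_of_nonpos ha] at h'
    linarith [(abs_le.1 h).2]
  have w0 := pos h0 c0 hsmall
  have w1 := pos h1 c1 (by rwa [← hw])
  rw [abs_of_pos w0, abs_of_pos w1] at hw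
  rw [← hw] at c1
  rw [abs_of_pos w0] at c0 c1
  have key : ∀ {b : ℝ}, |b - w 0| ≤ 2 * η * w 0 → |b / w 0 - 1| ≤ 2 * η := by
    intro b hb
    rw [div_sub_one w0.ne', abs_div, abs_of_pos w0, div_le_iff₀ w0]
    exact hb
  exact ⟨w0, key c0, key c1⟩

/-- The weighted geometric mean `u₁^{1-m} u₂^m`, `m = μ/(λ+μ)`, is invariant under the linear
saddle flow; the formula rewrites the scaled crossing coordinate accordingly. -/
lemma scaled_eq {lam mu a b d F t : ℝ} (hl : 0 < lam) (hm : 0 < mu) (ha : 0 < a) (hb : 0 < b)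
    (hd : 0 < d) (hF : 0 < F) :
    d ^ (-(mu / (lam + mu))) * F =
      a ^ (lam / (lam + mu)) * (b / d) ^ (mu / (lam + mu)) /
        ((Real.exp (-mu * t) * a / F) ^ (lam / (lam + mu)) *
          (Real.exp (lam * t) * b / F) ^ (mu / (lam + mu))) := by
  have hs : lam + mu ≠ 0 := by positivity
  have e1 : Real.exp (-mu * t) ^ (lam / (lam + mu)) * Real.exp (lam * t) ^ (mu / (lam + mu))
      = 1 := by
    rw [← Real.exp_mul, ← Real.exp_mul, ← Real.exp_add, Real.exp_eq_one_iff]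
    field_simp
    ring
  have e2 : F ^ (lam / (lam + mu)) * F ^ (mu / (lam + mu)) = F := by
    rw [← Real.rpow_add hF, ← add_div, div_self hs, Real.rpow_one]
  have pE1 := Real.exp_pos (-mu * t)
  have pE2 := Real.exp_pos (lam * t)
  rw [Real.rpow_neg hd.le, Real.div_rpow hb.le hd.le, Real.div_rpow (by positivity) hF.le,
    Real.div_rpow (by positivity) hF.le, Real.mul_rpow pE1.le ha.le, Real.mul_rpow pE2.le hb.le]
  have q1 := Real.rpow_pos_of_pos ha (lam / (lam + mu))
  have q2 := Real.rpow_pos_of_pos hb (mu / (lam + mu))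
  have q3 := Real.rpow_pos_of_pos hd (mu / (lam + mu))
  have q4 := Real.rpow_pos_of_pos hF (lam / (lam + mu))
  have q5 := Real.rpow_pos_of_pos hF (mu / (lam + mu))
  generalize Real.exp (-mu * t) ^ (lam / (lam + mu)) = E1 at *
  generalize Real.exp (lam * t) ^ (mu / (lam + mu)) = E2 at *
  generalize a ^ (lam / (lam + mu)) = A at *
  generalize b ^ (mu / (lam + mu)) = B at *
  generalize d ^ (mu / (lam + mu)) = D at *
  generalize F ^ (lam / (lam + mu)) = F1 at *
  generalize F ^ (mu / (lam + mu)) = F2 at *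
  have hE1 : E1 ≠ 0 := left_ne_zero_of_mul (e1 ▸ one_ne_zero)
  have hE2 : E2 ≠ 0 := right_ne_zero_of_mul (e1 ▸ one_ne_zero)
  rw [← e2]
  field_simp
  linear_combination e1

/-! ### The scaling limit -/

/-- Intermediate claim in the proof of Theorem 3.5: with `t_z` the first time `≥ T` at
which `|φ_t(x₀+z)₁| = |φ_t(x₀+z)₂|`, and `f(z) = φ_{t_z}(x₀+z)₁`, one has
`(D₀z)^{−μ/(λ+μ)} f(z) → x̄₀^{λ/(λ+μ)}` as `z → 0` with `D₀z > 0`, `|z| ≤ C D₀z`. -/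
theorem diagonal_crossing_point
    (S : SaddleFlow) (x₀ : EuclideanSpace ℝ (Fin 2))
    (hx₀_pos : 0 < ‖x₀‖) (hx₀_lt : ‖x₀‖ < S.delta / 8)
    (hx₀_stable : Tendsto (fun t => S.phi t x₀) atTop (𝓝 (0 : EuclideanSpace ℝ (Fin 2))))
    (xb : ℝ) (hxb_pos : 0 < xb) (hxb_lt : |xb| < S.delta / 4)
    (hxb : Tendsto (fun t => Real.exp (S.mu * t) • S.phi t x₀) atTop (𝓝 (vec2 xb 0)))
    (D₀ : EuclideanSpace ℝ (Fin 2)) (hD₀_ne : D₀ ≠ 0)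
    (hD₀ : Tendsto (fun t => Real.exp (-S.lam * t) • fderiv ℝ (S.phi t) x₀) atTop
      (𝓝 ((innerSL ℝ D₀).smulRight (EuclideanSpace.single 1 (1 : ℝ)))))
    (T : ℝ) (hT : 0 ≤ T)
    (hdiag : ∀ t : ℝ, T ≤ t → |S.phi t x₀ 1| < |S.phi t x₀ 0|)
    (f : EuclideanSpace ℝ (Fin 2) → ℝ)
    (hf : ∀ z, f z =
      S.phi (sInf {t : ℝ | T ≤ t ∧ |S.phi t (x₀ + z) 0| = |S.phi t (x₀ + z) 1|}) (x₀ + z) 0) :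
    ∀ C : ℝ, 0 < C → ∀ ε : ℝ, 0 < ε → ∃ ρ : ℝ, 0 < ρ ∧
      ∀ z : EuclideanSpace ℝ (Fin 2), 0 < ‖z‖ → ‖z‖ < ρ → 0 < ⟪D₀, z⟫ →
        ‖z‖ ≤ C * ⟪D₀, z⟫ →
        |(⟪D₀, z⟫ : ℝ) ^ (-(S.mu / (S.lam + S.mu))) * f z - xb ^ (S.lam / (S.lam + S.mu))| <
          ε := by
  intro C hC ε hε
  have hδ := S.delta_pos
  have hx₀ : ‖x₀‖ < S.delta := by linarith
  have hh := S.h_stable hx₀ hx₀_stable hxb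
  set l : Filter Plane := 𝓝[{z | 0 < ⟪D₀, z⟫ ∧ ‖z‖ ≤ C * ⟪D₀, z⟫}] 0 with hl
  have hl0 : l ≤ 𝓝 0 := nhdsWithin_le_nhds
  have hcone : ∀ᶠ z in l, 0 < ⟪D₀, z⟫ ∧ ‖z‖ ≤ C * ⟪D₀, z⟫ := eventually_mem_nhdsWithin
  have hd := S.h_differentiableAt (S.mem_U hx₀.le)
  have hadd : Tendsto (fun z : Plane => x₀ + z) l (𝓝 x₀) := by
    have : Tendsto (fun z : Plane => x₀ + z) (𝓝 0) (𝓝 (x₀ + 0)) :=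
      (continuous_const.add continuous_id).tendsto 0
    rw [add_zero] at this
    exact this.mono_left hl0
  have hy : Tendsto (fun z => S.h (x₀ + z)) l (𝓝 (S.h x₀)) :=
    hd.continuousAt.tendsto.comp hadd
  have ha : Tendsto (fun z => S.h (x₀ + z) 0) l (𝓝 xb) := by
    have := tendsto_coord hy 0
    rwa [hh] at this
  have hb0 : Tendsto (fun z => S.h (x₀ + z) 1) l (𝓝 0) := by
    have := tendsto_coord hy 1
    rwa [hh] at this
  -- In the cone `|z| ≤ C ⟪D₀, z⟫` the unstable coordinate is asymptotic to `⟪D₀, z⟫`.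
  have hbd : Tendsto (fun z => S.h (x₀ + z) 1 / ⟪D₀, z⟫) l (𝓝 1) := by
    rw [Metric.tendsto_nhds]
    intro e he
    have ho := (hasFDerivAt_iff_isLittleO_nhds_zero.1 hd.hasFDerivAt).def
      (show 0 < e / (2 * C) by positivity)
    filter_upwards [hl0 ho, hcone] with z hz hzc
    obtain ⟨hz1, hz2⟩ := hzc
    have h1 := (abs_apply_le_norm _ 1).trans hz
    rw [PiLp.sub_apply, PiLp.sub_apply, hh, vec2_one, sub_zero,
      S.inner_eq_fderiv hx₀ hx₀_stable hD₀] at h1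
    rw [Real.dist_eq, div_sub_one hz1.ne', abs_div, abs_of_pos hz1, div_lt_iff₀ hz1]
    have h2 : e / (2 * C) * ‖z‖ ≤ e / (2 * C) * (C * ⟪D₀, z⟫) := by gcongr
    have h3 : e / (2 * C) * (C * ⟪D₀, z⟫) = e * ⟪D₀, z⟫ / 2 := by field_simp
    have h4 : 0 < e * ⟪D₀, z⟫ := by positivity
    linarith
  have hapos : ∀ᶠ z in l, 0 < S.h (x₀ + z) 0 := ha.eventually (lt_mem_nhds hxb_pos)
  have hbpos : ∀ᶠ z in l, 0 < S.h (x₀ + z) 1 := by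
    filter_upwards [hbd.eventually (lt_mem_nhds one_pos), hcone] with z h1 h2
    exact (div_pos_iff_of_pos_right h2.1).1 h1
  set τ : Plane → ℝ := fun z =>
    sInf {t : ℝ | T ≤ t ∧ |S.phi t (x₀ + z) 0| = |S.phi t (x₀ + z) 1|} with hτ
  have hfτ : ∀ z, f z = S.phi (τ z) (x₀ + z) 0 := hf
  -- At the crossing both linear coordinates are asymptotic to `f z`.
  have core : ∀ η : ℝ, 0 < η → η ≤ 1 / 20 → ∀ᶠ z in l, 0 < f z ∧
      |Real.exp (-S.mu * τ z) * S.h (x₀ + z) 0 / f z - 1| ≤ 2 * η ∧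
      |Real.exp (S.lam * τ z) * S.h (x₀ + z) 1 / f z - 1| ≤ 2 * η := by
    intro η hη0 hη
    obtain ⟨κ, hκ0, hκ⟩ := Metric.eventually_nhds_iff.1 (S.h_littleO.def hη0)
    -- `r ≤ δ/8` keeps the trajectory linearizable, `r ≤ κ/4` puts the crossing where `h ≈ id`.
    set r := min (S.delta / 8) (κ / 4) with hr
    have hr0 : 0 < r := lt_min (by positivity) (by positivity)
    have hrδ : r ≤ S.delta / 8 := min_le_left _ _
    have hrκ : 4 * r ≤ κ := by linarith [min_le_right (S.delta / 8) (κ / 4)]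
    obtain ⟨s, hTs, hs⟩ : ∃ s, T ≤ s ∧ Real.exp (-S.mu * s) * (2 * xb) < r / 4 := by
      have h1 := (SaddleFlow.tendsto_exp_neg S.mu_pos).mul_const (2 * xb)
      rw [zero_mul] at h1
      have h2 := (h1.eventually (gt_mem_nhds (show 0 < r / 4 by positivity))).and
        (eventually_ge_atTop T)
      obtain ⟨s, hs1, hs2⟩ := h2.exists
      exact ⟨s, hs2, hs1⟩
    have hbs : Tendsto (fun z => Real.exp (S.lam * s) * S.h (x₀ + z) 1) l (𝓝 0) := by
      have := hb0.const_mul (Real.exp (S.lam * s))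
      rwa [mul_zero] at this
    filter_upwards [hapos, hbpos, ha.eventually (gt_mem_nhds (show xb < 2 * xb by linarith)),
      ha.eventually (gt_mem_nhds ((le_abs_self xb).trans_lt hxb_lt)),
      hbs.eventually (gt_mem_nhds hr0), hadd.norm.eventually (gt_mem_nhds hx₀),
      hy.eventually (S.no_crossing hx₀ hh hxb_lt hT hdiag s)] with z h1 h2 h3 h4 h5 h6 h7
    have hcr := S.crossing h6 hT hTs hr0 hrδ hrκ hη (fun w hw => hκ (by simpa using hw))
      h1 h4.le (le_trans (by gcongr) hs.le) h2 h5.le h7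
    obtain ⟨c1, c2, c3⟩ := hcr
    have hdc := diagonal_close hη c1 c3
    rw [c2] at hdc
    rw [hfτ]
    exact hdc (mul_pos (Real.exp_pos _) h1) (mul_pos (Real.exp_pos _) h2) hη0.le
  have hfpos : ∀ᶠ z in l, 0 < f z :=
    (core (1 / 20) (by norm_num) le_rfl).mono fun z hz => hz.1
  have hu0 : Tendsto (fun z => Real.exp (-S.mu * τ z) * S.h (x₀ + z) 0 / f z) l (𝓝 1) := by
    rw [Metric.tendsto_nhds]
    intro e he
    filter_upwards [core (min (e / 4) (1 / 20)) (by positivity) (min_le_right _ _)] with z hz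
    rw [Real.dist_eq]
    linarith [hz.2.1, min_le_left (e / 4) (1 / 20)]
  have hu1 : Tendsto (fun z => Real.exp (S.lam * τ z) * S.h (x₀ + z) 1 / f z) l (𝓝 1) := by
    rw [Metric.tendsto_nhds]
    intro e he
    filter_upwards [core (min (e / 4) (1 / 20)) (by positivity) (min_le_right _ _)] with z hz
    rw [Real.dist_eq]
    linarith [hz.2.2, min_le_left (e / 4) (1 / 20)]
  have hlim : Tendsto (fun z => (⟪D₀, z⟫ : ℝ) ^ (-(S.mu / (S.lam + S.mu))) * f z) l
      (𝓝 (xb ^ (S.lam / (S.lam + S.mu)))) := by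
    have h1 := ha.rpow_const (p := S.lam / (S.lam + S.mu)) (Or.inl hxb_pos.ne')
    have h2 := hbd.rpow_const (p := S.mu / (S.lam + S.mu)) (Or.inl one_ne_zero)
    have h3 := hu0.rpow_const (p := S.lam / (S.lam + S.mu)) (Or.inl one_ne_zero)
    have h4 := hu1.rpow_const (p := S.mu / (S.lam + S.mu)) (Or.inl one_ne_zero)
    have h5 := (h1.mul h2).div (h3.mul h4) (by simp)
    simp only [Real.one_rpow, mul_one, div_one] at h5
    refine h5.congr' ?_
    filter_upwards [hapos, hbpos, hcone, hfpos] with z z1 z2 z3 z4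
    exact (scaled_eq S.lam_pos S.mu_pos z1 z2 z3.1 z4).symm
  obtain ⟨ρ, hρ, hball⟩ := Metric.mem_nhdsWithin_iff.1 ((Metric.tendsto_nhds.1 hlim) ε hε)
  refine ⟨ρ, hρ, fun z _ hzρ hz1 hz2 => ?_⟩
  have := hball ⟨by simpa using hzρ, hz1, hz2⟩
  rwa [Set.mem_ofPred_eq, Real.dist_eq] at this
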